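/- Assume n ≥ 1 and gcd(d_0,…,d_n) = 1. Let λ ∈ K be such that either λ is not in the image of the canonical map ℤ → K, or λ is the image of an element of 𝒜. If M is a nonzero torsion-free λ-Euler graded D-module, then M_0 ≠ 0. (Equivalently: any torsion-free λ-Euler graded D-module with M_0 = 0 is zero, so the kernel of the global sections functor Γ_λ on twisted D-modules on the weighted projective stack with weights d_0,…,d_n is the zero category.) -/

import Mathlib

/-!
Context: `K` is a field of characteristic zero, `n ≥ 0`, and `d 0, …, d n` are
positive integers.  `A = K[x_0, …, x_n]` is the polynomial ring, graded with
`x i` of weighted degree `d i`.  Inside `End_K(A)` we have the multiplication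
operators `x i`, the partial derivatives `∂ i`, the Weyl algebra `D` generated
by them, and the Euler field `E = Σ_i d_i x_i ∂_i`.
-/

open MvPolynomial Finset

set_option synthInstance.maxHeartbeats 1000000
set_option maxHeartbeats 2000000

noncomputable section

variable (K : Type) [Field K] [CharZero K] (n : ℕ)

/-- The polynomial ring `A = K[x_0, …, x_n]`. -/
abbrev Amb := MvPolynomial (Fin (n+1)) K

/-- The operator of multiplication by `x_i` on `A`. -/
def xOp (i : Fin (n+1)) : Module.End K (Amb K n) := LinearMap.mulLeft K (X i)

/-- The partial derivative `∂/∂x_i` on `A`. -/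
def dOp (i : Fin (n+1)) : Module.End K (Amb K n) := (pderiv i).toLinearMap

/-- The Weyl algebra `D`: the `K`-subalgebra of `End_K(A)` generated by
`x_0, …, x_n, ∂_0, …, ∂_n`. -/
def Weyl : Subalgebra K (Module.End K (Amb K n)) :=
  Algebra.adjoin K (Set.range (xOp K n) ∪ Set.range (dOp K n))

variable (d : Fin (n+1) → ℕ)

/-- The Euler field `E = Σ_i d_i x_i ∂_i`, as an endomorphism of `A`. -/
def euler : Module.End K (Amb K n) := ∑ i, (d i : K) • (xOp K n i * dOp K n i)

lemma xOp_mem (i : Fin (n+1)) : xOp K n i ∈ Weyl K n :=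
  Algebra.subset_adjoin (Or.inl ⟨i, rfl⟩)

lemma dOp_mem (i : Fin (n+1)) : dOp K n i ∈ Weyl K n :=
  Algebra.subset_adjoin (Or.inr ⟨i, rfl⟩)

lemma euler_mem : euler K n d ∈ Weyl K n :=
  Subalgebra.sum_mem _ fun i _ => Subalgebra.smul_mem _
    (Subalgebra.mul_mem _ (xOp_mem K n i) (dOp_mem K n i)) _

/-- `x_i` as an element of the Weyl algebra. -/
def xElt (i : Fin (n+1)) : Weyl K n := ⟨xOp K n i, xOp_mem K n i⟩

/-- `∂_i` as an element of the Weyl algebra. -/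
def dElt (i : Fin (n+1)) : Weyl K n := ⟨dOp K n i, dOp_mem K n i⟩

/-- The Euler field as an element of the Weyl algebra. -/
def eulerElt : Weyl K n := ⟨euler K n d, euler_mem K n d⟩

/-!
Along an arithmetic progression of degrees `k + ℤ d_i`, the degrees in which `M` vanishes form an
interval: if `M_k = 0`, then `∂_i` kills `M_{k + d_i}`, and `x_i ^ q` is injective on `ker ∂_i`
because `∂_i x_i ^ q = x_i ^ q ∂_i + q x_i ^ (q - 1)`, so `M_{k + (q + 1) d_i} = 0` forces
`M_{k + d_i} = 0`.

Suppose `M_0 = 0`, and let `L` be a multiple of every `d_i`. If `L ≤ 0`, then `M_L` consists of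
torsion elements, as suitable powers of the `x_i` send it into `M_0`. If `L ≥ 0`, then suitable
powers of the `∂_i` kill `M_L`; a nonzero element would lead to a nonzero homogeneous `v`, of degree
`l` say, killed by every `∂_i`. The Euler field gives `λ + l = 0`, so `-l = ∑ b_i d_i` by the
assumption on `λ`, and `(∏ x_i ^ b_i) v` would be a nonzero element of `M_0`.

So `M` vanishes in all common multiples of the `d_i`. By the interval property it vanishes in all
their translates by `∑ ℤ d_i`, which is `ℤ` since the `d_i` have greatest common divisor one.
-/

section CanonicalCommutation

lemma mul_pow_succ_of_mul_eq_mul_add_one {A : Type*} [Semiring A] {p x : A}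
    (h : p * x = x * p + 1) (n : ℕ) : p * x ^ (n + 1) = x ^ (n + 1) * p + (n + 1) • x ^ n := by
  induction n with
  | zero => simpa using h
  | succ n ih =>
    calc p * x ^ (n + 2) = p * x ^ (n + 1) * x := by rw [pow_succ _ (n + 1), mul_assoc]
      _ = x ^ (n + 1) * (p * x) + (n + 1) • x ^ (n + 1) := by
        rw [ih, add_mul, mul_assoc, smul_mul_assoc, ← pow_succ]
      _ = x ^ (n + 2) * p + (n + 2) • x ^ (n + 1) := by
        rw [h, mul_add, ← mul_assoc, ← pow_succ, mul_one, add_assoc, ← succ_nsmul' _ (n + 1)]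

variable {R M : Type*} [Semiring R] [AddCommMonoid M] [Module R M]

lemma eq_zero_of_pow_apply_eq_zero_of_apply_eq_zero [IsAddTorsionFree M] {X P : Module.End R M}
    (h : P * X = X * P + 1) {m : M} (hP : P m = 0) {q : ℕ} (hX : (X ^ q) m = 0) : m = 0 := by
  induction q with
  | zero => simpa using hX
  | succ q ih =>
    have hq : (q + 1) • (X ^ q) m = 0 := by
      simpa only [LinearMap.add_apply, LinearMap.smul_apply, Module.End.mul_apply, hP, hX, map_zero,
        zero_add] using (LinearMap.congr_fun (mul_pow_succ_of_mul_eq_mul_add_one h q) m).symm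
    exact ih ((smul_eq_zero.mp hq).resolve_left q.succ_ne_zero)

lemma exists_mem_common_ker_of_commute {ι : Type*} [Finite ι] {P : ι → Module.End R M}
    (hcomm : ∀ i j, Commute (P i) (P j)) {S : Set M} (hS : ∀ i, Set.MapsTo (P i) S S) {m : M}
    (hm : m ∈ S) (hm0 : m ≠ 0) {N : ι → ℕ} (hN : ∀ i, (P i ^ N i) m = 0) :
    ∃ v ∈ S, v ≠ 0 ∧ ∀ i, P i v = 0 := by
  classical
  induction N using WellFoundedLT.induction generalizing m with
  | ind N ih =>
    by_cases hker : ∀ i, P i m = 0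
    · exact ⟨m, hm, hm0, hker⟩
    obtain ⟨i, hi⟩ := not_forall.mp hker
    obtain ⟨q, hq⟩ : ∃ q, N i = q + 1 :=
      Nat.exists_eq_succ_of_ne_zero fun h0 => hm0 (by simpa [h0] using hN i)
    refine ih (Function.update N i q) (update_lt_self_iff.mpr (by lia)) (hS i hm) hi fun j => ?_
    obtain rfl | hji := eq_or_ne j i
    · rw [Function.update_self, ← Module.End.mul_apply, ← pow_succ, ← hq, hN]
    · rw [Function.update_of_ne hji, ← Module.End.mul_apply, ((hcomm j i).pow_left _).eq,
        Module.End.mul_apply, hN, map_zero]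

end CanonicalCommutation

/-- The endomorphism `T` is homogeneous of degree `e` with respect to the family `ℳ` of graded
pieces: it sends `ℳ k` into `ℳ (k + e)`. -/
def IsHomogeneousOfDegree {G R M : Type*} [Add G] [Semiring R] [AddCommMonoid M] [Module R M]
    (ℳ : G → Submodule R M) (T : Module.End R M) (e : G) : Prop :=
  ∀ k, ∀ m ∈ ℳ k, T m ∈ ℳ (k + e)

section Graded

variable {ι G R M : Type*} [Semiring R] [AddCommMonoid M] [Module R M]

namespace IsHomogeneousOfDegree

variable [AddMonoid G] {ℳ : G → Submodule R M} {T : Module.End R M} {e : G}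

lemma pow (hT : IsHomogeneousOfDegree ℳ T e) (p : ℕ) : IsHomogeneousOfDegree ℳ (T ^ p) (p • e) := by
  induction p with
  | zero => intro k m hm; simpa using hm
  | succ p ih =>
    intro k m hm
    rw [pow_succ', Module.End.mul_apply, succ_nsmul, ← add_assoc]
    exact hT _ _ (ih k m hm)

lemma pow_apply_eq_zero (hT : IsHomogeneousOfDegree ℳ T e) {k : G} {m : M} (hm : m ∈ ℳ k) {p : ℕ}
    (hbot : ℳ (k + p • e) = ⊥) : (T ^ p) m = 0 := by
  simpa only [hbot, Submodule.mem_bot] using hT.pow p k m hm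

end IsHomogeneousOfDegree

lemma eq_bot_of_forall_exists_add_nsmul_eq_bot [Finite ι] [AddMonoid G] {ℳ : G → Submodule R M}
    {X : ι → Module.End R M} {e : ι → G} (hX : ∀ i, IsHomogeneousOfDegree ℳ (X i) (e i))
    (htf : ∀ m : M, (∃ c : ℕ, ∀ i, (X i ^ c) m = 0) → m = 0) {k : G}
    (hbot : ∀ i, ∃ p : ℕ, ℳ (k + p • e i) = ⊥) : ℳ k = ⊥ := by
  choose p hp using hbot
  obtain ⟨c, hc⟩ := (Set.finite_range p).bddAbove
  refine (Submodule.eq_bot_iff _).mpr fun m hm => htf m ⟨c, fun i => ?_⟩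
  exact Module.End.pow_map_zero_of_le (hc ⟨i, rfl⟩) ((hX i).pow_apply_eq_zero hm (hp i))

lemma exists_homogeneous_mem_common_ker [Finite ι] [AddMonoid G]
    {ℳ : G → Submodule R M} {P : ι → Module.End R M} {e : ι → G}
    (hcomm : ∀ i j, Commute (P i) (P j)) (hP : ∀ i, IsHomogeneousOfDegree ℳ (P i) (e i)) {k : G}
    (hk : ℳ k ≠ ⊥) (hbot : ∀ i, ∃ p : ℕ, ℳ (k + p • e i) = ⊥) :
    ∃ l, ∃ v ∈ ℳ l, v ≠ 0 ∧ ∀ i, P i v = 0 := by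
  obtain ⟨m, hm, hm0⟩ := Submodule.exists_mem_ne_zero_of_ne_bot hk
  choose p hp using hbot
  obtain ⟨v, ⟨l, hv⟩, hv0, hPv⟩ := exists_mem_common_ker_of_commute hcomm
    (S := {v | ∃ l, v ∈ ℳ l}) (fun i v ⟨l, hv⟩ => ⟨l + e i, hP i l v hv⟩) ⟨k, hm⟩ hm0
    fun i => (hP i).pow_apply_eq_zero hm (hp i)
  exact ⟨l, v, hv, hv0, hPv⟩

lemma exists_mem_add_sum_ne_zero_of_common_ker [IsAddTorsionFree M] [AddCommMonoid G]
    {ℳ : G → Submodule R M} {X P : ι → Module.End R M} {e : ι → G}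
    (hPX : ∀ i, P i * X i = X i * P i + 1) (hPX' : Pairwise fun i j => Commute (P i) (X j))
    (hX : ∀ i, IsHomogeneousOfDegree ℳ (X i) (e i)) {k : G} {m : M} (hm : m ∈ ℳ k) (hm0 : m ≠ 0)
    (hPm : ∀ i, P i m = 0) (b : ι → ℕ) (s : Finset ι) :
    ∃ v ∈ ℳ (k + ∑ i ∈ s, b i • e i), v ≠ 0 ∧ ∀ i ∉ s, P i v = 0 := by
  classical
  induction s using Finset.induction_on with
  | empty => exact ⟨m, by simpa using hm, hm0, fun i _ => hPm i⟩
  | insert i s his ih =>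
    obtain ⟨v, hv, hv0, hPv⟩ := ih
    refine ⟨(X i ^ b i) v, ?_, fun h => hv0 ?_, fun j hj => ?_⟩
    · rw [Finset.sum_insert his, add_comm (b i • e i), ← add_assoc]
      exact (hX i).pow (b i) _ v hv
    · exact eq_zero_of_pow_apply_eq_zero_of_apply_eq_zero (hPX i) (hPv i his) h
    · rw [Finset.mem_insert, not_or] at hj
      rw [← Module.End.mul_apply, ((hPX' hj.1).pow_right (b i)).eq, Module.End.mul_apply,
        hPv j hj.2, map_zero]

section Convexity

variable [IsAddTorsionFree M] [AddCommGroup G] {ℳ : G → Submodule R M} {X P : Module.End R M}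
  {a : G}

lemma eq_bot_add_of_eq_bot (h : P * X = X * P + 1) (hX : IsHomogeneousOfDegree ℳ X a)
    (hP : IsHomogeneousOfDegree ℳ P (-a)) {k : G} (hk : ℳ k = ⊥) {q : ℕ}
    (hq : ℳ (k + a + q • a) = ⊥) : ℳ (k + a) = ⊥ := by
  refine (Submodule.eq_bot_iff _).mpr fun m hm => ?_
  have hPm : P m = 0 := by simpa [hk] using hP _ m hm
  exact eq_zero_of_pow_apply_eq_zero_of_apply_eq_zero h hPm (hX.pow_apply_eq_zero hm hq)

lemma ordConnected_setOf_add_zsmul_eq_bot (h : P * X = X * P + 1)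
    (hX : IsHomogeneousOfDegree ℳ X a) (hP : IsHomogeneousOfDegree ℳ P (-a)) (k : G) :
    {c : ℤ | ℳ (k + c • a) = ⊥}.OrdConnected := by
  refine ⟨fun l hl u hu c hc => ?_⟩
  obtain ⟨hlc, hcu⟩ := hc
  induction c, hlc using Int.leInduction with
  | base => exact hl
  | succ c _ ih =>
    obtain ⟨q, rfl⟩ := Int.le.dest hcu
    have hc : ℳ (k + c • a) = ⊥ := ih (by lia)
    rw [Set.mem_ofPred_eq, add_zsmul, one_zsmul, ← add_assoc]
    refine eq_bot_add_of_eq_bot h hX hP hc (q := q) ?_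
    simpa [add_zsmul, add_assoc] using hu

end Convexity

end Graded

section Gcd

variable {ι : Type*}

lemma natCast_finset_gcd (s : Finset ι) (d : ι → ℕ) :
    ((s.gcd d : ℕ) : ℤ) = s.gcd fun i => (d i : ℤ) := by
  classical
  induction s using Finset.induction_on with
  | empty => simp
  | insert i s _ ih => simp [Finset.gcd_insert, ← ih, ← Int.coe_gcd, gcd_eq_nat_gcd]

lemma add_mul_mem_of_ordConnected {S : Set ℤ} {a L r : ℤ} (ha : 0 < a) (hL : 0 < L) (haL : a ∣ L)
    (hS : ∀ k, {c : ℤ | k + a * c ∈ S}.OrdConnected) (hr : ∀ z, r + L * z ∈ S) (c z : ℤ) :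
    r + a * c + L * z ∈ S := by
  obtain ⟨q, rfl⟩ := haL
  have hq : |c| ≤ q * |c| := le_mul_of_one_le_left (abs_nonneg c) (pos_of_mul_pos_right hL ha.le)
  have hmem (w : ℤ) : q * w ∈ {x : ℤ | r + a * q * z + a * x ∈ S} := by
    simpa only [Set.mem_ofPred_eq, mul_add, mul_assoc, add_assoc] using hr (z + w)
  have hc : c ∈ Set.Icc (q * -|c|) (q * |c|) := by
    rw [Set.mem_Icc, mul_neg, ← abs_le]
    exact hq
  simpa only [Set.mem_ofPred_eq, add_right_comm] using (hS _).out (hmem (-|c|)) (hmem |c|) hc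

lemma eq_univ_of_ordConnected_of_gcd_eq_one [Fintype ι] {d : ι → ℕ} (hd : ∀ i, 0 < d i)
    (hgcd : Finset.univ.gcd d = 1) {S : Set ℤ}
    (hS : ∀ i k, {c : ℤ | k + d i * c ∈ S}.OrdConnected)
    (hdvd : ∀ k : ℤ, (∀ i, (d i : ℤ) ∣ k) → k ∈ S) : S = Set.univ := by
  classical
  have hpos (i : ι) : 0 < (d i : ℤ) := by exact_mod_cast hd i
  obtain ⟨L, hL, hdL⟩ : ∃ L : ℤ, 0 < L ∧ ∀ i, (d i : ℤ) ∣ L :=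
    ⟨∏ i, (d i : ℤ), Finset.prod_pos fun i _ => hpos i,
      fun i => Finset.dvd_prod_of_mem _ (Finset.mem_univ i)⟩
  have hcoset (c : ι → ℤ) (s : Finset ι) : ∀ z, ∑ i ∈ s, d i * c i + L * z ∈ S := by
    induction s using Finset.induction_on with
    | empty => exact fun z => hdvd _ fun i => by simpa using (hdL i).mul_right z
    | insert i s his ih =>
      rw [Finset.sum_insert his, add_comm (_ * _)]
      exact add_mul_mem_of_ordConnected (hpos i) hL (hdL i) (hS i) ih (c i)
  obtain ⟨g, hg⟩ := Finset.gcd_eq_sum_mul Finset.univ fun i => (d i : ℤ)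
  rw [← natCast_finset_gcd, hgcd, Nat.cast_one] at hg
  refine Set.eq_univ_of_forall fun r => ?_
  have hr : ∑ i, d i * (g i * r) = r := by
    simp_rw [← mul_assoc, ← Finset.sum_mul, ← hg, one_mul]
  simpa only [hr, mul_zero, add_zero] using hcoset (fun i => g i * r) Finset.univ 0

end Gcd

lemma grade_zero_ne_bot_of_common_ker {ι R M : Type*} [Fintype ι] [Ring R] [IsDomain R]
    [AddCommGroup M] [Module R M] [Module.IsTorsionFree R M] [IsAddTorsionFree M]
    {X P : ι → Module.End R M} (hPX : ∀ i, P i * X i = X i * P i + 1)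
    (hPX' : Pairwise fun i j => Commute (P i) (X j)) {d : ι → ℕ} {ℳ : ℤ → Submodule R M}
    (hX : ∀ i, IsHomogeneousOfDegree ℳ (X i) (d i)) {l : ℤ} {v : M} (hv : v ∈ ℳ l) (hv0 : v ≠ 0)
    (hPv : ∀ i, P i v = 0) {t : R} (hE : ∑ i, d i • X i (P i v) = (t + l) • v)
    (ht : ∀ z : ℤ, t = z → ∃ b : ι → ℕ, z = ∑ i, b i * d i) : ℳ 0 ≠ ⊥ := by
  intro hbot
  have htl : (t + l) • v = 0 := by simpa [hPv] using hE.symm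
  have htl' : t = ((-l : ℤ) : R) := by
    rw [Int.cast_neg]
    exact eq_neg_of_add_eq_zero_left ((smul_eq_zero.mp htl).resolve_right hv0)
  obtain ⟨b, hb⟩ := ht (-l) htl'
  have hdeg : l + ∑ i, b i • (d i : ℤ) = 0 := by
    push_cast at hb
    simp only [nsmul_eq_mul, ← hb, add_neg_cancel]
  obtain ⟨w, hw, hw0, -⟩ :=
    exists_mem_add_sum_ne_zero_of_common_ker hPX hPX' hX hv hv0 hPv b Finset.univ
  rw [hdeg, hbot, Submodule.mem_bot] at hw
  exact hw0 hw

theorem stmt15_general {ι R M : Type*} [Fintype ι] [Ring R] [IsDomain R] [CharZero R]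
    [AddCommGroup M] [Module R M] [Module.IsTorsionFree R M] [Nontrivial M]
    {X P : ι → Module.End R M} (hPP : ∀ i j, Commute (P i) (P j))
    (hPX : ∀ i, P i * X i = X i * P i + 1) (hPX' : Pairwise fun i j => Commute (P i) (X j))
    {d : ι → ℕ} (hd : ∀ i, 0 < d i) (hgcd : Finset.univ.gcd d = 1)
    {ℳ : ℤ → Submodule R M} (htop : ⨆ k, ℳ k = ⊤)
    (hX : ∀ i, IsHomogeneousOfDegree ℳ (X i) (d i))
    (hP : ∀ i, IsHomogeneousOfDegree ℳ (P i) (-(d i : ℤ))) {t : R}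
    (hE : ∀ k : ℤ, ∀ m ∈ ℳ k, ∑ i, d i • X i (P i m) = (t + k) • m)
    (ht : ∀ z : ℤ, t = z → ∃ b : ι → ℕ, z = ∑ i, b i * d i)
    (htf : ∀ m : M, (∃ c : ℕ, ∀ i, (X i ^ c) m = 0) → m = 0) : ℳ 0 ≠ ⊥ := by
  have : IsAddTorsionFree M := .of_isTorsionFree R M
  intro hbot
  suffices h : {k | ℳ k = ⊥} = Set.univ by
    have hall (k : ℤ) : ℳ k = ⊥ := h.ge (Set.mem_univ k)
    exact bot_ne_top (by rw [← htop, iSup_eq_bot.mpr hall])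
  refine eq_univ_of_ordConnected_of_gcd_eq_one hd hgcd (fun i k => ?_) fun k hk => ?_
  · simpa only [smul_eq_mul, mul_comm, Set.mem_ofPred_eq] using
      ordConnected_setOf_add_zsmul_eq_bot (hPX i) (hX i) (hP i) k
  obtain ⟨N, hN⟩ := Int.eq_nat_or_neg k
  have hNd (i : ι) : ∃ p : ℕ, (N : ℤ) = p • (d i : ℤ) := by
    obtain ⟨p, hp⟩ : d i ∣ N := by
      rcases hN with rfl | rfl <;> simpa [Int.natCast_dvd] using hk i
    exact ⟨p, by simp [hp, mul_comm]⟩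
  rcases hN with rfl | rfl
  · by_contra hne
    obtain ⟨l, v, hv, hv0, hPv⟩ := exists_homogeneous_mem_common_ker hPP hP hne
      fun i => (hNd i).imp fun p hp => by rw [hp, smul_neg, add_neg_cancel, hbot]
    exact grade_zero_ne_bot_of_common_ker hPX hPX' hX hv hv0 hPv (hE l v hv) ht hbot
  · exact eq_bot_of_forall_exists_add_nsmul_eq_bot hX htf fun i =>
      (hNd i).imp fun p hp => by rw [hp, neg_add_cancel, hbot]

section Weyl

lemma dElt_mul_xElt_self (i : Fin (n + 1)) :
    dElt K n i * xElt K n i = xElt K n i * dElt K n i + 1 := by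
  refine Subtype.ext (LinearMap.ext fun f => ?_)
  simp [dElt, xElt, dOp, xOp, mul_comm, add_comm]

lemma commute_dElt_xElt {i j : Fin (n + 1)} (hij : i ≠ j) :
    Commute (dElt K n i) (xElt K n j) := by
  refine Subtype.ext (LinearMap.ext fun f => ?_)
  simp [dElt, xElt, dOp, xOp, pderiv_X_of_ne hij.symm]

lemma lie_pderiv_pderiv {R σ : Type*} [CommRing R] (i j : σ) :
    ⁅pderiv (R := R) i, pderiv (R := R) j⁆ = 0 := by
  classical
  refine MvPolynomial.derivation_ext fun l => ?_
  simp [Derivation.commutator_apply, pderiv_X, Pi.single_apply, apply_ite]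

lemma commute_dElt_dElt (i j : Fin (n + 1)) : Commute (dElt K n i) (dElt K n j) := by
  refine Subtype.ext (LinearMap.ext fun f => ?_)
  simpa [Derivation.commutator_apply, sub_eq_zero, dElt, dOp] using
    Derivation.congr_fun (lie_pderiv_pderiv (R := K) i j) f

lemma eulerElt_eq_sum : eulerElt K n d = ∑ i, d i • (xElt K n i * dElt K n i) := by
  apply Subtype.ext
  simp [eulerElt, euler, xElt, dElt, Nat.cast_smul_eq_nsmul]

end Weyl

/-- Assume `n ≥ 1` and `gcd(d_0,…,d_n) = 1`.  Let `λ ∈ K` be either not in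
the image of `ℤ → K`, or the image of an element of the submonoid `𝒜 ⊆ ℕ` generated by
`d_0, …, d_n`.  If `M` is a nonzero torsion-free `λ`-Euler graded `D`-module, then
`M_0 ≠ 0` (so the kernel of the global sections functor `Γ_λ` on twisted `D`-modules on
the weighted projective stack with weights `d_0, …, d_n` is the zero category). -/
theorem stmt15 (hn : 1 ≤ n) (hd : ∀ i, 0 < d i)
    (hgcd : Finset.univ.gcd d = 1) (t : K)
    (ht : (∀ z : ℤ, t ≠ (z : K)) ∨ ∃ b : Fin (n+1) → ℕ, t = ((∑ i, b i * d i : ℕ) : K))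
    {M : Type} [AddCommGroup M] [Module K M]
    (ρ : Weyl K n →ₐ[K] Module.End K M)
    (Mgr : ℤ → Submodule K M)
    (hdirect : DirectSum.IsInternal Mgr)
    (hgx : ∀ (i : Fin (n+1)) (k : ℤ), ∀ m ∈ Mgr k, ρ (xElt K n i) m ∈ Mgr (k + d i))
    (hgd : ∀ (i : Fin (n+1)) (k : ℤ), ∀ m ∈ Mgr k, ρ (dElt K n i) m ∈ Mgr (k - d i))
    (hgE : ∀ (k : ℤ), ∀ m ∈ Mgr k, ρ (eulerElt K n d) m = (t + (k : K)) • m)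
    (htf : ∀ m : M, (∃ c : ℕ, ∀ i : Fin (n+1), (ρ (xElt K n i) ^ c) m = 0) → m = 0)
    (hM : ∃ m : M, m ≠ 0) :
    Mgr 0 ≠ ⊥ := by
  obtain ⟨m, hm⟩ := hM
  have : Nontrivial M := ⟨m, 0, hm⟩
  refine stmt15_general (fun i j => (commute_dElt_dElt K n i j).map ρ)
    (fun i => by rw [← map_mul, dElt_mul_xElt_self, map_add, map_mul, map_one])
    (fun i j hij => (commute_dElt_xElt K n hij).map ρ) hd hgcd hdirect.submodule_iSup_eq_top
    hgx hgd (t := t) (fun k m hm => ?_) (fun z hz => ?_) htf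
  · simp [← hgE k m hm, eulerElt_eq_sum]
  · rcases ht with ht | ⟨b, hb⟩
    · exact absurd hz (ht z)
    · exact ⟨b, by exact_mod_cast hz.symm.trans hb⟩

end
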